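/- arXiv:2502.06622 — 4 statements merged into one kernel-verified Lean document; each statement's English description precedes it below -/
import Mathlib

section
/- Let ε > 0, let Φ : ℝ⁴ → ℂ be C² and nowhere vanishing, and let A : ℝ⁴ → ℝ⁴ be C¹. With D_α g = ε ∂_α g + i A_α g, J_α = −Im(Φ · conj(D_αΦ)) and ρ = |Φ|², assume Φ solves the semiclassical Klein–Gordon equation −D₀(D₀Φ) + Σ_{i=1}^3 D_i(D_iΦ) = Φ on ℝ⁴. Then everywhere on ℝ⁴: (−J₀² + J₁² + J₂² + J₃²)/ρ = ε² · |Φ| · (−∂₀∂₀|Φ| + Σ_{i=1}^3 ∂_i∂_i|Φ|) − ρ. -/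
open ComplexConjugate

noncomputable def pd2R (f : (Fin 4 → ℝ) → ℝ) (α β : Fin 4) (x : Fin 4 → ℝ) : ℝ :=
  fderiv ℝ (fun y => fderiv ℝ f y (Pi.single β 1)) x (Pi.single α 1)

/-- The gauge-covariant derivative `D_α g = ε ∂_α g + i A_α g`. -/
noncomputable def Dop (ε : ℝ) (A : (Fin 4 → ℝ) → Fin 4 → ℝ) (α : Fin 4)
    (g : (Fin 4 → ℝ) → ℂ) : (Fin 4 → ℝ) → ℂ :=
  fun x => (ε : ℂ) * fderiv ℝ g x (Pi.single α 1) + Complex.I * (A x α : ℂ) * g x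

/-!
The covariant derivative is metric: `ε ∂⟪f, g⟫ = ⟪D f, g⟫ + ⟪f, D g⟫` for the real inner product of
`ℂ`, because multiplication by `i A` is skew-adjoint. Hence `⟪Φ, D Φ⟫ = ε |Φ| ∂|Φ|`, and
differentiating once more gives `ε² ((∂|Φ|)² + |Φ| ∂∂|Φ|) = |D Φ|² + ⟪Φ, D (D Φ)⟫`. The real and
imaginary parts of `Φ · conj (D Φ)` are `ε |Φ| ∂|Φ|` and `-J`, so
`|Φ|² |D Φ|² = (ε |Φ| ∂|Φ|)² + J²`; the terms in `(∂|Φ|)²` cancel and leave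
`J² / ρ = ε² |Φ| ∂∂|Φ| - ⟪Φ, D (D Φ)⟫` in each direction. Summed against the
metric, the last term becomes `⟪Φ, Φ⟫ = ρ` by the Klein-Gordon equation.
-/

section CovariantDerivative

open scoped RealInnerProductSpace Topology

variable {E : Type*} [NormedAddCommGroup E] [NormedSpace ℝ E] {x : E}

theorem differentiableAt_fderiv_apply {F : Type*} [NormedAddCommGroup F] [NormedSpace ℝ F]
    {f : E → F} (hf : ContDiffAt ℝ 2 f x) (v : E) :
    DifferentiableAt ℝ (fun y => fderiv ℝ f y v) x :=
  ((hf.fderiv_right (m := 1) (by norm_num)).differentiableAt one_ne_zero).clm_apply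
    (differentiableAt_const v)

theorem norm_mul_fderiv_norm_apply {F : Type*} [NormedAddCommGroup F] [InnerProductSpace ℝ F]
    {f : E → F} (hf : DifferentiableAt ℝ f x) (h0 : f x ≠ 0) (v : E) :
    ‖f x‖ * fderiv ℝ (fun y => ‖f y‖) x v = ⟪f x, fderiv ℝ f x v⟫ := by
  have hnorm := (hf.norm ℝ h0).hasFDerivAt.norm_sq
  simp only [norm_norm] at hnorm
  have h := congrArg (· v) (hnorm.unique hf.hasFDerivAt.norm_sq)
  simpa [mul_comm] using h

theorem norm_sq_mul_norm_sq_eq_inner_sq_add_im_sq (z w : ℂ) :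
    ‖z‖ ^ 2 * ‖w‖ ^ 2 = ⟪z, w⟫ ^ 2 + (z * conj w).im ^ 2 := by
  have hinner : ⟪z, w⟫ = (z * conj w).re := by rw [real_inner_comm, Complex.inner]
  rw [hinner, ← mul_pow, ← Complex.norm_conj w, ← norm_mul, Complex.sq_norm, Complex.normSq_apply]
  ring

theorem inner_I_mul_ofReal_mul_left (r : ℝ) (z w : ℂ) :
    ⟪Complex.I * r * z, w⟫ = -⟪z, Complex.I * r * w⟫ := by
  simp only [Complex.inner, map_mul, Complex.conj_I, Complex.conj_ofReal, ← Complex.neg_re]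
  ring_nf

/-- The gauge-covariant derivative `ε ∂_v g + i a g` in the direction `v`, where `a` is the
component along `v` of the potential; `Dop ε A α` is the case of the coordinate direction `α`. -/
noncomputable def covDeriv (ε : ℝ) (a : E → ℝ) (v : E) (g : E → ℂ) (x : E) : ℂ :=
  (ε : ℂ) * fderiv ℝ g x v + Complex.I * (a x : ℂ) * g x

theorem Dop_eq_covDeriv (ε : ℝ) (A : (Fin 4 → ℝ) → Fin 4 → ℝ) (α : Fin 4) :
    Dop ε A α = covDeriv ε (A · α) (Pi.single α 1) :=
  rfl

/-- The component `-Im (Φ · conj (D_v Φ))` along `v` of the momentum of the wave function `Φ`. -/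
noncomputable def momentum (ε : ℝ) (a : E → ℝ) (v : E) (Φ : E → ℂ) (x : E) : ℝ :=
  -(Φ x * conj (covDeriv ε a v Φ x)).im

variable {ε : ℝ} {a : E → ℝ} {f g Φ : E → ℂ}

theorem differentiableAt_covDeriv (ha : DifferentiableAt ℝ a x) (hg : ContDiffAt ℝ 2 g x) (v : E) :
    DifferentiableAt ℝ (covDeriv ε a v g) x := by
  have ha' : DifferentiableAt ℝ (fun y => (a y : ℂ)) x :=
    Complex.ofRealCLM.differentiableAt.comp x ha
  exact ((differentiableAt_fderiv_apply hg v).const_mul _).add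
    ((ha'.const_mul _).mul (hg.differentiableAt two_ne_zero))

theorem mul_fderiv_inner_eq_covDeriv (hf : DifferentiableAt ℝ f x) (hg : DifferentiableAt ℝ g x)
    (ε : ℝ) (a : E → ℝ) (v : E) :
    ε * fderiv ℝ (fun y => ⟪f y, g y⟫) x v =
      ⟪covDeriv ε a v f x, g x⟫ + ⟪f x, covDeriv ε a v g x⟫ := by
  rw [fderiv_inner_apply ℝ hf hg]
  simp only [covDeriv, inner_add_left, inner_add_right, inner_I_mul_ofReal_mul_left,
    ← Complex.real_smul, real_inner_smul_left, real_inner_smul_right]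
  ring

theorem inner_covDeriv_self (hΦ : DifferentiableAt ℝ Φ x) (h0 : Φ x ≠ 0) (ε : ℝ) (a : E → ℝ)
    (v : E) :
    ⟪Φ x, covDeriv ε a v Φ x⟫ = ε * (‖Φ x‖ * fderiv ℝ (fun y => ‖Φ y‖) x v) := by
  have hmetric := mul_fderiv_inner_eq_covDeriv hΦ hΦ ε a v
  rw [fderiv_inner_apply ℝ hΦ hΦ, real_inner_comm (Φ x), real_inner_comm (Φ x)] at hmetric
  rw [norm_mul_fderiv_norm_apply hΦ h0]
  linear_combination -hmetric / 2

theorem norm_sq_mul_norm_sq_covDeriv (hΦ : DifferentiableAt ℝ Φ x) (h0 : Φ x ≠ 0) (ε : ℝ)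
    (a : E → ℝ) (v : E) :
    ‖Φ x‖ ^ 2 * ‖covDeriv ε a v Φ x‖ ^ 2 =
      (ε * (‖Φ x‖ * fderiv ℝ (fun y => ‖Φ y‖) x v)) ^ 2 + momentum ε a v Φ x ^ 2 := by
  rw [norm_sq_mul_norm_sq_eq_inner_sq_add_im_sq, inner_covDeriv_self hΦ h0, momentum, neg_sq]

theorem norm_sq_covDeriv_add_inner_covDeriv_covDeriv (ha : DifferentiableAt ℝ a x)
    (hΦ : ContDiffAt ℝ 2 Φ x) (h0 : Φ x ≠ 0) (ε : ℝ) (v : E) :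
    ‖covDeriv ε a v Φ x‖ ^ 2 + ⟪Φ x, covDeriv ε a v (covDeriv ε a v Φ) x⟫ =
      ε ^ 2 * (fderiv ℝ (fun y => ‖Φ y‖) x v ^ 2 +
        ‖Φ x‖ * fderiv ℝ (fun y => fderiv ℝ (fun z => ‖Φ z‖) y v) x v) := by
  have hd : DifferentiableAt ℝ Φ x := hΦ.differentiableAt two_ne_zero
  have hinner : (fun y => ⟪Φ y, covDeriv ε a v Φ y⟫) =ᶠ[𝓝 x]
      fun y => ε * (‖Φ y‖ * fderiv ℝ (fun z => ‖Φ z‖) y v) := by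
    filter_upwards [hΦ.eventually (by simp), hΦ.continuousAt.eventually_ne h0] with y hy hy0
    exact inner_covDeriv_self (hy.differentiableAt two_ne_zero) hy0 ε a v
  have hnorm : DifferentiableAt ℝ (fun y => ‖Φ y‖) x := hd.norm ℝ h0
  have hnorm' : DifferentiableAt ℝ (fun y => fderiv ℝ (fun z => ‖Φ z‖) y v) x :=
    differentiableAt_fderiv_apply (hΦ.norm ℝ h0) v
  calc
    ‖covDeriv ε a v Φ x‖ ^ 2 + ⟪Φ x, covDeriv ε a v (covDeriv ε a v Φ) x⟫
        = ε * fderiv ℝ (fun y => ⟪Φ y, covDeriv ε a v Φ y⟫) x v := by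
      rw [mul_fderiv_inner_eq_covDeriv hd (differentiableAt_covDeriv ha hΦ v) ε a v,
        real_inner_self_eq_norm_sq]
    _ = ε * fderiv ℝ (fun y => ε * (‖Φ y‖ * fderiv ℝ (fun z => ‖Φ z‖) y v)) x v := by
      rw [hinner.fderiv_eq]
    _ = ε ^ 2 * (fderiv ℝ (fun y => ‖Φ y‖) x v ^ 2 +
          ‖Φ x‖ * fderiv ℝ (fun y => fderiv ℝ (fun z => ‖Φ z‖) y v) x v) := by
      rw [fderiv_const_mul (hnorm.fun_mul hnorm'), fderiv_fun_mul hnorm hnorm']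
      simp only [smul_apply, add_apply, smul_eq_mul]
      ring

theorem momentum_sq_div_norm_sq (ha : DifferentiableAt ℝ a x) (hΦ : ContDiffAt ℝ 2 Φ x)
    (h0 : Φ x ≠ 0) (ε : ℝ) (v : E) :
    momentum ε a v Φ x ^ 2 / ‖Φ x‖ ^ 2 =
      ε ^ 2 * ‖Φ x‖ * fderiv ℝ (fun y => fderiv ℝ (fun z => ‖Φ z‖) y v) x v -
        ⟪Φ x, covDeriv ε a v (covDeriv ε a v Φ) x⟫ := by
  have hsecond := norm_sq_covDeriv_add_inner_covDeriv_covDeriv ha hΦ h0 ε v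
  have hfirst := norm_sq_mul_norm_sq_covDeriv (hΦ.differentiableAt two_ne_zero) h0 ε a v
  rw [div_eq_iff (pow_ne_zero 2 (norm_ne_zero_iff.mpr h0))]
  linear_combination ‖Φ x‖ ^ 2 * hsecond - hfirst

theorem stmt2_general {ι : Type*} [Fintype ι] (ε : ℝ) (η : ι → ℝ) (e : ι → E) (A : E → ι → ℝ)
    {Φ : E → ℂ} {x : E} (hΦ : ContDiffAt ℝ 2 Φ x) (hA : DifferentiableAt ℝ A x) (h0 : Φ x ≠ 0)
    (hKG : ∑ i, η i • covDeriv ε (A · i) (e i) (covDeriv ε (A · i) (e i) Φ) x = Φ x) :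
    (∑ i, η i * momentum ε (A · i) (e i) Φ x ^ 2) / ‖Φ x‖ ^ 2 =
      ε ^ 2 * ‖Φ x‖ *
        ∑ i, η i * fderiv ℝ (fun y => fderiv ℝ (fun z => ‖Φ z‖) y (e i)) x (e i) -
      ‖Φ x‖ ^ 2 := by
  have hdir (i : ι) := momentum_sq_div_norm_sq (differentiableAt_pi.mp hA i) hΦ h0 ε (e i)
  have hmass : ∑ i, η i * ⟪Φ x, covDeriv ε (A · i) (e i) (covDeriv ε (A · i) (e i) Φ) x⟫ =
      ‖Φ x‖ ^ 2 := by
    simp only [← real_inner_smul_right, ← inner_sum]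
    rw [hKG, real_inner_self_eq_norm_sq]
  simp only [Finset.sum_div, mul_div_assoc, hdir, mul_sub, Finset.sum_sub_distrib, hmass,
    Finset.mul_sum, mul_left_comm]

end CovariantDerivative

/-- Proposition 3.6, equation (5.3): for solutions of the semiclassical Klein-Gordon
equation, `J^αJ_α/ρ = ε² √ρ □√ρ − ρ`. -/
theorem stmt2 (ε : ℝ) (hε : 0 < ε)
    (Φ : (Fin 4 → ℝ) → ℂ) (A : (Fin 4 → ℝ) → Fin 4 → ℝ)
    (hΦ : ContDiff ℝ 2 Φ) (hA : ContDiff ℝ 1 A)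
    (hne : ∀ x, Φ x ≠ 0)
    (hKG : ∀ x, -(Dop ε A 0 (Dop ε A 0 Φ)) x + (Dop ε A 1 (Dop ε A 1 Φ)) x
      + (Dop ε A 2 (Dop ε A 2 Φ)) x + (Dop ε A 3 (Dop ε A 3 Φ)) x = Φ x)
    (J : Fin 4 → (Fin 4 → ℝ) → ℝ)
    (hJ : ∀ α x, J α x = - (Φ x * conj (Dop ε A α Φ x)).im)
    (ρ : (Fin 4 → ℝ) → ℝ) (hρ : ∀ x, ρ x = ‖Φ x‖ ^ 2) :
    ∀ x, (-(J 0 x) ^ 2 + (J 1 x) ^ 2 + (J 2 x) ^ 2 + (J 3 x) ^ 2) / ρ x =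
      ε ^ 2 * ‖Φ x‖ *
        (- pd2R (fun y => ‖Φ y‖) 0 0 x
         + pd2R (fun y => ‖Φ y‖) 1 1 x
         + pd2R (fun y => ‖Φ y‖) 2 2 x
         + pd2R (fun y => ‖Φ y‖) 3 3 x) - ρ x := by
  intro x
  have hmom (α : Fin 4) : J α x = momentum ε (A · α) (Pi.single α 1) Φ x := hJ α x
  simpa [Fin.sum_univ_four, hmom, hρ, pd2R] using
    stmt2_general ε ![-1, 1, 1, 1] (Pi.single · 1) A hΦ.contDiffAt
      (hA.differentiable one_ne_zero x) (hne x)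
      (by simpa [Fin.sum_univ_four, Dop_eq_covDeriv] using hKG x)
end

section
/- Let ξ₀, ξ₁, ξ₂, ξ₃ ∈ ℂ, E, B ∈ ℝ³, X⁰ ∈ ℝ and X ∈ ℝ³. Set e = (|ξ₀|² + |ξ₁|² + |ξ₂|² + |ξ₃|² + ‖E‖² + ‖B‖²)/2. Then (X⁰ − ‖X‖)·e ≤ X⁰·e + Σ_{i=1}^3 Re(ξ₀ · conj(ξ_i)) X_i + ⟨X, E × B⟩ ≤ (X⁰ + ‖X‖)·e, where × is the cross product on ℝ³, ⟨·,·⟩ the Euclidean inner product and ‖·‖ the Euclidean norm. -/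
open ComplexConjugate

/-- The cross product on `ℝ³`. -/
noncomputable def cross (a b : Fin 3 → ℝ) : Fin 3 → ℝ :=
  ![a 1 * b 2 - a 2 * b 1, a 2 * b 0 - a 0 * b 2, a 0 * b 1 - a 1 * b 0]

/-! By Cauchy–Schwarz the spatial part of the flux is at most `‖X‖` times the momentum density.
The matter momentum is at most `|ξ₀| (∑ᵢ |ξᵢ|²)^(1/2)` and, by Lagrange's identity, the Poynting
vector `E × B` is at most `‖E‖ ‖B‖`; the inequality `r s ≤ (r² + s²) / 2` then bounds both by the
corresponding parts of the energy density `e`. -/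

lemma norm_sum_smul_le_sqrt_mul_sqrt {ι R V : Type*} [SeminormedRing R]
    [SeminormedAddCommGroup V] [Module R V] [IsBoundedSMul R V]
    (s : Finset ι) (c : ι → R) (v : ι → V) :
    ‖∑ i ∈ s, c i • v i‖ ≤ √(∑ i ∈ s, ‖c i‖ ^ 2) * √(∑ i ∈ s, ‖v i‖ ^ 2) :=
  calc ‖∑ i ∈ s, c i • v i‖
      ≤ ∑ i ∈ s, ‖c i‖ * ‖v i‖ := norm_sum_le_of_le s fun i _ => norm_smul_le (c i) (v i)
    _ ≤ √(∑ i ∈ s, ‖c i‖ ^ 2) * √(∑ i ∈ s, ‖v i‖ ^ 2) :=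
      Real.sum_mul_le_sqrt_mul_sqrt s (‖c ·‖) (‖v ·‖)

lemma abs_sum_inner_mul_le {ι V : Type*} [SeminormedAddCommGroup V] [InnerProductSpace ℝ V]
    (s : Finset ι) (v : ι → V) (w : V) (x : ι → ℝ) :
    |∑ i ∈ s, inner ℝ (v i) w * x i| ≤
      √(∑ i ∈ s, x i ^ 2) * (√(∑ i ∈ s, ‖v i‖ ^ 2) * ‖w‖) := by
  have hcomb : ∑ i ∈ s, inner ℝ (v i) w * x i = inner ℝ (∑ i ∈ s, x i • v i) w := by
    simp only [sum_inner, real_inner_smul_left, mul_comm]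
  have hnorm : ‖∑ i ∈ s, x i • v i‖ ≤ √(∑ i ∈ s, x i ^ 2) * √(∑ i ∈ s, ‖v i‖ ^ 2) := by
    simpa only [Real.norm_eq_abs, sq_abs] using norm_sum_smul_le_sqrt_mul_sqrt s x v
  calc |∑ i ∈ s, inner ℝ (v i) w * x i|
      ≤ ‖∑ i ∈ s, x i • v i‖ * ‖w‖ := hcomb ▸ abs_real_inner_le_norm _ _
    _ ≤ √(∑ i ∈ s, x i ^ 2) * √(∑ i ∈ s, ‖v i‖ ^ 2) * ‖w‖ := by gcongr
    _ = √(∑ i ∈ s, x i ^ 2) * (√(∑ i ∈ s, ‖v i‖ ^ 2) * ‖w‖) := mul_assoc _ _ _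

lemma cross_eq_crossProduct (a b : Fin 3 → ℝ) : cross a b = crossProduct a b :=
  (cross_apply a b).symm

lemma sum_sq_cross (a b : Fin 3 → ℝ) :
    ∑ i, cross a b i ^ 2 = (∑ i, a i ^ 2) * (∑ i, b i ^ 2) - (∑ i, a i * b i) ^ 2 := by
  have lagrange := cross_dot_cross a b a b
  rw [← cross_eq_crossProduct, dotProduct_comm b a] at lagrange
  simpa only [dotProduct, ← sq] using lagrange

lemma sqrt_sum_sq_cross_le (a b : Fin 3 → ℝ) :
    √(∑ i, cross a b i ^ 2) ≤ √(∑ i, a i ^ 2) * √(∑ i, b i ^ 2) := by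
  rw [← Real.sqrt_mul (by positivity), sum_sq_cross]
  exact Real.sqrt_le_sqrt (sub_le_self _ (sq_nonneg _))

lemma abs_sum_mul_cross_le (x a b : Fin 3 → ℝ) :
    |∑ i, x i * cross a b i| ≤
      √(∑ i, x i ^ 2) * (√(∑ i, a i ^ 2) * √(∑ i, b i ^ 2)) :=
  calc |∑ i, x i * cross a b i|
      ≤ √(∑ i, x i ^ 2) * √(∑ i, cross a b i ^ 2) := by
        simpa only [Real.norm_eq_abs, sq_abs, smul_eq_mul] using
          norm_sum_smul_le_sqrt_mul_sqrt Finset.univ x (cross a b)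
    _ ≤ √(∑ i, x i ^ 2) * (√(∑ i, a i ^ 2) * √(∑ i, b i ^ 2)) := by
        gcongr
        exact sqrt_sum_sq_cross_le a b

lemma sqrt_mul_sqrt_le_half_add {a b : ℝ} (ha : 0 ≤ a) (hb : 0 ≤ b) :
    √a * √b ≤ (a + b) / 2 := by
  have h := two_mul_le_add_sq √a √b
  rw [Real.sq_sqrt ha, Real.sq_sqrt hb] at h
  linarith

lemma sqrt_sum_norm_sq_succ_mul_norm_zero_le {V : Type*} [SeminormedAddCommGroup V] {n : ℕ}
    (ξ : Fin (n + 1) → V) :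
    √(∑ i : Fin n, ‖ξ i.succ‖ ^ 2) * ‖ξ 0‖ ≤ (∑ α, ‖ξ α‖ ^ 2) / 2 := by
  rw [Fin.sum_univ_succ, add_comm (‖ξ 0‖ ^ 2)]
  simpa only [Real.sqrt_sq (norm_nonneg _)] using
    sqrt_mul_sqrt_le_half_add (Finset.sum_nonneg fun i _ => sq_nonneg ‖ξ (Fin.succ i)‖)
      (sq_nonneg ‖ξ 0‖)

lemma abs_sum_inner_mul_add_sum_mul_cross_le {V : Type*} [SeminormedAddCommGroup V]
    [InnerProductSpace ℝ V] (ξ : Fin 4 → V) (E B X : Fin 3 → ℝ) :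
    |(∑ i : Fin 3, inner ℝ (ξ i.succ) (ξ 0) * X i) + ∑ i, X i * cross E B i| ≤
      √(∑ i, X i ^ 2) *
        (((∑ α, ‖ξ α‖ ^ 2) + (∑ i, E i ^ 2) + ∑ i, B i ^ 2) / 2) := by
  have matter : |∑ i : Fin 3, inner ℝ (ξ i.succ) (ξ 0) * X i| ≤
      √(∑ i, X i ^ 2) * ((∑ α, ‖ξ α‖ ^ 2) / 2) :=
    (abs_sum_inner_mul_le Finset.univ (fun i : Fin 3 => ξ i.succ) (ξ 0) X).trans <| by
      gcongr
      exact sqrt_sum_norm_sq_succ_mul_norm_zero_le ξ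
  have poynting : |∑ i, X i * cross E B i| ≤
      √(∑ i, X i ^ 2) * (((∑ i, E i ^ 2) + ∑ i, B i ^ 2) / 2) :=
    (abs_sum_mul_cross_le X E B).trans <| by
      gcongr
      exact sqrt_mul_sqrt_le_half_add (by positivity) (by positivity)
  calc |(∑ i : Fin 3, inner ℝ (ξ i.succ) (ξ 0) * X i) + ∑ i, X i * cross E B i|
      ≤ √(∑ i, X i ^ 2) * ((∑ α, ‖ξ α‖ ^ 2) / 2) +
          √(∑ i, X i ^ 2) * (((∑ i, E i ^ 2) + ∑ i, B i ^ 2) / 2) :=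
        (abs_add_le _ _).trans (add_le_add matter poynting)
    _ = √(∑ i, X i ^ 2) *
          (((∑ α, ‖ξ α‖ ^ 2) + (∑ i, E i ^ 2) + ∑ i, B i ^ 2) / 2) := by ring

theorem stmt9_general {V : Type*} [SeminormedAddCommGroup V] [InnerProductSpace ℝ V]
    (ξ : Fin 4 → V) (E B : Fin 3 → ℝ) (X0 : ℝ) (X : Fin 3 → ℝ) (e : ℝ)
    (he : e = ((∑ α : Fin 4, ‖ξ α‖ ^ 2) + (∑ i, (E i) ^ 2)
      + ∑ i, (B i) ^ 2) / 2) :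
    (X0 - Real.sqrt (∑ i, (X i) ^ 2)) * e ≤
      X0 * e + (∑ i : Fin 3, inner ℝ (ξ i.succ) (ξ 0) * X i)
        + (∑ i : Fin 3, X i * cross E B i) ∧
    X0 * e + (∑ i : Fin 3, inner ℝ (ξ i.succ) (ξ 0) * X i)
        + (∑ i : Fin 3, X i * cross E B i) ≤ (X0 + Real.sqrt (∑ i, (X i) ^ 2)) * e := by
  have momentum_bound := abs_sum_inner_mul_add_sum_mul_cross_le ξ E B X
  rw [← he] at momentum_bound
  obtain ⟨lower, upper⟩ := abs_le.mp momentum_bound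
  constructor <;> linarith

/-- The key pointwise estimate in the proof of Proposition 5.5: two-sided bound of the
modulated energy flux `h_{0β}X^β = e X⁰ + Σᵢ Re(ξ₀ conj ξᵢ)Xᵢ + ⟨X, E×B⟩` in terms of
the modulated energy density `e = (|ξ|² + ‖E‖² + ‖B‖²)/2`. -/
theorem stmt9 (ξ : Fin 4 → ℂ) (E B : Fin 3 → ℝ) (X0 : ℝ) (X : Fin 3 → ℝ)
    (e : ℝ)
    (he : e = ((∑ α : Fin 4, ‖ξ α‖ ^ 2) + (∑ i, (E i) ^ 2)
      + ∑ i, (B i) ^ 2) / 2) :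
    (X0 - Real.sqrt (∑ i, (X i) ^ 2)) * e ≤
      X0 * e + (∑ i : Fin 3, (ξ 0 * conj (ξ i.succ)).re * X i)
        + (∑ i : Fin 3, X i * cross E B i) ∧
    X0 * e + (∑ i : Fin 3, (ξ 0 * conj (ξ i.succ)).re * X i)
        + (∑ i : Fin 3, X i * cross E B i) ≤ (X0 + Real.sqrt (∑ i, (X i) ^ 2)) * e := by
  simpa only [Complex.inner] using stmt9_general ξ E B X0 X e he
end

section
/- Let U : ℝ⁴ → ℝ⁴ be C¹ with covariant components U_β and raised components U^α = η_αU_α (η₀ = −1, ηᵢ = 1), let ρ : ℝ⁴ → ℝ be C¹ and nonnegative, and let F : ℝ⁴ → ℝ^{4×4} be continuous with F_{αβ} = −F_{βα}. Assume on ℝ⁴: the normalization −U₀² + Σ_{i=1}^3 U_i² = −1, the Euler equation Σ_α U^α ∂_α U_β = Σ_α U^α F_{αβ} for each β, and the continuity equation Σ_α ∂_α(U^α ρ) = 0. Let μ be the measure on ℝ⁴ × ℝ⁴ obtained as the pushforward, under the map x ↦ (x, U(x)), of Lebesgue measure on ℝ⁴ with density ρ. Then: (i) the support of μ is contained in ℝ⁴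 × {ξ ∈ ℝ⁴ : −ξ₀² + Σᵢξᵢ² = −1} (the mass shell); and (ii) for every smooth compactly supported a : ℝ⁴ × ℝ⁴ → ℝ (variables (x, ξ)), ∫ [ Σ_α η_α ξ_α (∂a/∂x^α)(x, ξ) + Σ_{α,β} η_α ξ_α F_{αβ}(x) (∂a/∂ξ_β)(x, ξ) ] dμ(x, ξ) = 0, i.e. (F, μ) is a weak solution of the relativistic massive Vlasov–Maxwell transport equation. -/
open MeasureTheory

noncomputable def pdR (f : (Fin 4 → ℝ) → ℝ) (α : Fin 4) (x : Fin 4 → ℝ) : ℝ :=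
  fderiv ℝ f x (Pi.single α 1)

/-- The Minkowski signs: `η₀ = −1`, `ηᵢ = 1`. -/
noncomputable def eta : Fin 4 → ℝ := fun α => if α = 0 then -1 else 1

/-! Restrict a test function `a` to the graph of `U`: for `b x = a (x, U x)` the chain rule gives
`Db(x) v = Da(x, U x) (v, DU(x) v)`. Taking `v` to be the velocity and using the Euler equation to
replace `DU(x) v` by the force, the transport operator applied to `a` becomes `Db(x) v` on the
graph. Its integral against `ρ` is `∫ Db (ρ v) = ∫ div (b ρ v)`, because the current `ρ v` is
divergence-free, and this vanishes because `b` has compact support. -/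

section Divergence

variable {E : Type*} [NormedAddCommGroup E] [NormedSpace ℝ E]

/-- The divergence of a vector field on a finite-dimensional space, encoded without coordinates as
the trace of its derivative. It has the junk value `0` where the field is not differentiable. -/
noncomputable def divergence (X : E → E) (x : E) : ℝ :=
  LinearMap.trace ℝ E (fderiv ℝ X x)

theorem divergence_pi {ι : Type*} [Fintype ι] [DecidableEq ι] {X : (ι → ℝ) → ι → ℝ} {x : ι → ℝ}
    (hX : DifferentiableAt ℝ X x) :
    divergence X x = ∑ i, fderiv ℝ (fun y => X y i) x (Pi.single i 1) := by
  simp [divergence, LinearMap.trace_eq_matrix_trace ℝ (Pi.basisFun ℝ ι), Matrix.trace,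
    fderiv_apply hX]

variable [FiniteDimensional ℝ E]

theorem divergence_smul {f : E → ℝ} {X : E → E} {x : E} (hf : DifferentiableAt ℝ f x)
    (hX : DifferentiableAt ℝ X x) :
    divergence (fun y => f y • X y) x = f x * divergence X x + fderiv ℝ f x (X x) := by
  simp [divergence, fderiv_fun_smul hf hX]

variable [MeasurableSpace E] [BorelSpace E] (ν : Measure E) [ν.IsAddHaarMeasure]

theorem integral_fderiv_eq_zero_of_hasCompactSupport {G : Type*} [NormedAddCommGroup G]
    [NormedSpace ℝ G] {f : E → G} (hf : ContDiff ℝ 1 f) (hfs : HasCompactSupport f) :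
    ∫ x, fderiv ℝ f x ∂ν = 0 := by
  have hf' : Continuous (fderiv ℝ f) := hf.continuous_fderiv one_ne_zero
  have hint : Integrable (fderiv ℝ f) ν := hf'.integrable_of_hasCompactSupport (hfs.fderiv ℝ)
  ext v
  rw [ContinuousLinearMap.integral_apply hint]
  simpa using integral_smul_fderiv_eq_neg_fderiv_smul_of_integrable (μ := ν) (v := v)
    (f := fun _ => (1 : ℝ)) (g := f) (by simp) (by simpa using hint.apply_continuousLinearMap v)
    (by simpa using hf.continuous.integrable_of_hasCompactSupport hfs)
    (fun _ _ => differentiableAt_const _) (fun x _ => hf.differentiable one_ne_zero x)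

theorem integral_divergence_eq_zero_of_hasCompactSupport {X : E → E} (hX : ContDiff ℝ 1 X)
    (hXs : HasCompactSupport X) : ∫ x, divergence X x ∂ν = 0 := by
  let tr : (E →L[ℝ] E) →L[ℝ] ℝ := LinearMap.toContinuousLinearMap
    (LinearMap.trace ℝ E ∘ₗ ContinuousLinearMap.coeLM ℝ)
  have hint : Integrable (fderiv ℝ X) ν :=
    (hX.continuous_fderiv one_ne_zero).integrable_of_hasCompactSupport (hXs.fderiv ℝ)
  calc ∫ x, divergence X x ∂ν = tr (∫ x, fderiv ℝ X x ∂ν) := tr.integral_comp_comm hint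
    _ = 0 := by rw [integral_fderiv_eq_zero_of_hasCompactSupport ν hX hXs, map_zero]

theorem integral_fderiv_apply_eq_zero_of_divergence_eq_zero {f : E → ℝ} {X : E → E}
    (hf : ContDiff ℝ 1 f) (hfs : HasCompactSupport f) (hX : ContDiff ℝ 1 X)
    (hdiv : ∀ x, divergence X x = 0) : ∫ x, fderiv ℝ f x (X x) ∂ν = 0 := by
  have hprod (x : E) : fderiv ℝ f x (X x) = divergence (fun y => f y • X y) x := by
    rw [divergence_smul (hf.differentiable one_ne_zero x) (hX.differentiable one_ne_zero x),
      hdiv, mul_zero, zero_add]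
  simp_rw [hprod]
  exact integral_divergence_eq_zero_of_hasCompactSupport ν (hf.smul hX) hfs.smul_right

end Divergence

section Graph

theorem isClosedEmbedding_graph {E G : Type*} [TopologicalSpace E] [TopologicalSpace G] [T2Space E]
    [T2Space G] {U : E → G} (hU : Continuous U) : Topology.IsClosedEmbedding fun x => (x, U x) :=
  Function.LeftInverse.isClosedEmbedding (f := Prod.fst) (fun _ => rfl) continuous_fst
    (continuous_id.prodMk hU)

theorem fderiv_comp_graph_apply {E G H : Type*} [NormedAddCommGroup E] [NormedSpace ℝ E]
    [NormedAddCommGroup G] [NormedSpace ℝ G] [NormedAddCommGroup H] [NormedSpace ℝ H] {U : E → G}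
    {a : E × G → H} {x : E} (ha : DifferentiableAt ℝ a (x, U x)) (hU : DifferentiableAt ℝ U x)
    (v : E) :
    fderiv ℝ (fun y => a (y, U y)) x v = fderiv ℝ a (x, U x) (v, fderiv ℝ U x v) := by
  have hgraph := (hasFDerivAt_id x).prodMk hU.hasFDerivAt
  exact congrArg (· v) (ha.hasFDerivAt.comp (f := fun y => (y, U y)) x hgraph).fderiv

end Graph

section Monokinetic

variable {E G : Type*} [MeasurableSpace E] [MeasurableSpace G]

/-- The monokinetic measure `ρ δ_{U = ξ} ⊗ ν` on position–momentum space: the matter at `x`, of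
density `ρ x` with respect to `ν`, all has momentum `U x`. Negative values of `ρ` count as `0`. -/
noncomputable def monokineticMeasure (ν : Measure E) (ρ : E → ℝ) (U : E → G) : Measure (E × G) :=
  (ν.withDensity fun x => ENNReal.ofReal (ρ x)).map fun x => (x, U x)

variable {ν : Measure E} {ρ : E → ℝ} {U : E → G}

theorem ae_monokineticMeasure_snd_mem (hU : MeasurableEmbedding fun x => (x, U x)) {S : Set G}
    (hS : ∀ x, U x ∈ S) : ∀ᵐ p ∂monokineticMeasure ν ρ U, p.2 ∈ S :=
  hU.ae_map_iff.2 (.of_forall hS)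

theorem integral_monokineticMeasure (hU : MeasurableEmbedding fun x => (x, U x))
    (hρ : Measurable ρ) (hρ_nonneg : ∀ x, 0 ≤ ρ x) (f : E × G → ℝ) :
    ∫ p, f p ∂monokineticMeasure ν ρ U = ∫ x, ρ x * f (x, U x) ∂ν := by
  rw [monokineticMeasure, hU.integral_map,
    integral_withDensity_eq_integral_toReal_smul hρ.ennreal_ofReal (by simp)]
  simp only [ENNReal.toReal_ofReal (hρ_nonneg _), smul_eq_mul]

theorem integrable_monokineticMeasure_iff (hU : MeasurableEmbedding fun x => (x, U x))
    (hρ : Measurable ρ) (hρ_nonneg : ∀ x, 0 ≤ ρ x) {f : E × G → ℝ} :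
    Integrable f (monokineticMeasure ν ρ U) ↔ Integrable (fun x => ρ x * f (x, U x)) ν := by
  rw [monokineticMeasure, hU.integrable_map_iff,
    integrable_withDensity_iff_integrable_smul' hρ.ennreal_ofReal (by simp)]
  simp only [Function.comp_apply, ENNReal.toReal_ofReal (hρ_nonneg _), smul_eq_mul]

end Monokinetic

section Transport

variable {E G : Type*} [NormedAddCommGroup E] [NormedSpace ℝ E] [MeasurableSpace E]
  [NormedAddCommGroup G] [NormedSpace ℝ G] [MeasurableSpace G]

/-- Weak solutions `μ` of the transport equation `div_x (V μ) + div_ξ (K μ) = 0` on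
position–momentum space, with velocity `V` and force `K`. Integrability is required explicitly
because the integral of a non-integrable function is `0` by convention. -/
def IsWeakTransportSolution (V : E × G → E) (K : E × G → G) (μ : Measure (E × G)) : Prop :=
  ∀ a : E × G → ℝ, ContDiff ℝ 1 a → HasCompactSupport a →
    Integrable (fun p => fderiv ℝ a p (V p, K p)) μ ∧ ∫ p, fderiv ℝ a p (V p, K p) ∂μ = 0

theorem isWeakTransportSolution_monokineticMeasure [FiniteDimensional ℝ E] [BorelSpace E]
    [BorelSpace G] (ν : Measure E) [ν.IsAddHaarMeasure] {ρ : E → ℝ} {U : E → G} {V : E × G → E}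
    {K : E × G → G} (hU : ContDiff ℝ 1 U) (hρ : Measurable ρ) (hρ_nonneg : ∀ x, 0 ≤ ρ x)
    (hJ : ContDiff ℝ 1 fun x => ρ x • V (x, U x))
    (hEuler : ∀ x, fderiv ℝ U x (V (x, U x)) = K (x, U x))
    (hcont : ∀ x, divergence (fun y => ρ y • V (y, U y)) x = 0) :
    IsWeakTransportSolution V K (monokineticMeasure ν ρ U) := by
  intro a ha hac
  have hgraph := isClosedEmbedding_graph hU.continuous
  have hb : ContDiff ℝ 1 fun x => a (x, U x) := ha.comp (contDiff_id.prodMk hU)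
  have hbs : HasCompactSupport fun x => a (x, U x) := hac.comp_isClosedEmbedding hgraph
  have hpull (x : E) : ρ x * fderiv ℝ a (x, U x) (V (x, U x), K (x, U x)) =
      fderiv ℝ (fun y => a (y, U y)) x (ρ x • V (x, U x)) := by
    rw [map_smul, fderiv_comp_graph_apply (ha.differentiable one_ne_zero _)
      (hU.differentiable one_ne_zero x), hEuler, smul_eq_mul]
  rw [integrable_monokineticMeasure_iff hgraph.measurableEmbedding hρ hρ_nonneg,
    integral_monokineticMeasure hgraph.measurableEmbedding hρ hρ_nonneg]
  simp only [hpull]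
  refine ⟨?_, integral_fderiv_apply_eq_zero_of_divergence_eq_zero ν hb hbs hJ hcont⟩
  refine ((hb.continuous_fderiv one_ne_zero).clm_apply
    hJ.continuous).integrable_of_hasCompactSupport ?_
  exact (hbs.fderiv ℝ).mono fun x hx h => hx (by simp [h])

end Transport

section Coordinates

theorem map_eq_sum_smul_single {R M 𝓕 ι : Type*} [Fintype ι] [DecidableEq ι] [Semiring R]
    [AddCommMonoid M] [Module R M] [FunLike 𝓕 (ι → R) M] [LinearMapClass 𝓕 R (ι → R) M] (L : 𝓕)
    (v : ι → R) : L v = ∑ i, v i • L (Pi.single i 1) := by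
  conv_lhs => rw [pi_eq_sum_univ' v]
  simp only [map_sum, map_smul]

theorem map_prodMk_eq_sum_smul_single {R M ι κ : Type*} [Fintype ι] [DecidableEq ι] [Fintype κ]
    [DecidableEq κ] [Semiring R] [AddCommMonoid M] [Module R M] (L : (ι → R) × (κ → R) →ₗ[R] M)
    (v : ι → R) (w : κ → R) :
    L (v, w) = ∑ i, v i • L (Pi.single i 1, 0) + ∑ j, w j • L (0, Pi.single j 1) := by
  calc L (v, w) = (L ∘ₗ .inl R _ _) v + (L ∘ₗ .inr R _ _) w := by
        simp [← map_add]
    _ = ∑ i, v i • L (Pi.single i 1, 0) + ∑ j, w j • L (0, Pi.single j 1) := by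
        rw [map_eq_sum_smul_single _ v, map_eq_sum_smul_single _ w]
        rfl

theorem fderiv_pi_apply_eq_sum {ι κ : Type*} [Fintype ι] [DecidableEq ι] [Finite κ]
    {U : (ι → ℝ) → κ → ℝ} {x : ι → ℝ} (hU : DifferentiableAt ℝ U x) (v : ι → ℝ) (j : κ) :
    fderiv ℝ U x v j = ∑ i, v i * fderiv ℝ (fun y => U y j) x (Pi.single i 1) := by
  have := Fintype.ofFinite κ
  rw [map_eq_sum_smul_single (fderiv ℝ U x) v, fderiv_apply hU]
  simp

variable {ι : Type*} [Fintype ι] [DecidableEq ι]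

theorem stmt13_general (η : ι → ℝ) {U : (ι → ℝ) → ι → ℝ} (hU : ContDiff ℝ 1 U)
    {ρ : (ι → ℝ) → ℝ} (hρ : ContDiff ℝ 1 ρ) (hρ_nonneg : ∀ x, 0 ≤ ρ x)
    (F : (ι → ℝ) → ι → ι → ℝ) {S : Set (ι → ℝ)} (hS : ∀ x, U x ∈ S)
    (hEuler : ∀ x β, ∑ α, η α * U x α * fderiv ℝ (fun y => U y β) x (Pi.single α 1) =
      ∑ α, η α * U x α * F x α β)
    (hcont : ∀ x, ∑ α, fderiv ℝ (fun y => η α * U y α * ρ y) x (Pi.single α 1) = 0) :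
    (∀ᵐ p ∂monokineticMeasure volume ρ U, p.2 ∈ S) ∧
    ∀ a : (ι → ℝ) × (ι → ℝ) → ℝ, ContDiff ℝ 1 a → HasCompactSupport a →
      Integrable (fun p => ∑ α, η α * p.2 α * fderiv ℝ a p (Pi.single α 1, 0) +
        ∑ α, ∑ β, η α * p.2 α * F p.1 α β * fderiv ℝ a p (0, Pi.single β 1))
        (monokineticMeasure volume ρ U) ∧
      ∫ p, (∑ α, η α * p.2 α * fderiv ℝ a p (Pi.single α 1, 0) +
        ∑ α, ∑ β, η α * p.2 α * F p.1 α β * fderiv ℝ a p (0, Pi.single β 1))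
        ∂monokineticMeasure volume ρ U = 0 := by
  refine ⟨ae_monokineticMeasure_snd_mem
    (isClosedEmbedding_graph hU.continuous).measurableEmbedding hS, fun a ha hac => ?_⟩
  let V (p : (ι → ℝ) × (ι → ℝ)) (α : ι) : ℝ := η α * p.2 α
  let K (p : (ι → ℝ) × (ι → ℝ)) (β : ι) : ℝ := ∑ α, V p α * F p.1 α β
  have hJ : ContDiff ℝ 1 fun x => ρ x • V (x, U x) := by
    have hUα (α : ι) : ContDiff ℝ 1 fun x => U x α := contDiff_pi.1 hU α
    exact hρ.smul (contDiff_pi.2 fun α => contDiff_const.mul (hUα α))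
  have hforce (x : ι → ℝ) : fderiv ℝ U x (V (x, U x)) = K (x, U x) := by
    ext β
    rw [fderiv_pi_apply_eq_sum (hU.differentiable one_ne_zero x), hEuler]
  have hdiv (x : ι → ℝ) : divergence (fun y => ρ y • V (y, U y)) x = 0 := by
    rw [divergence_pi (hJ.differentiable one_ne_zero x)]
    simpa only [V, Pi.smul_apply, smul_eq_mul, mul_comm (ρ _)] using hcont x
  have hexpand (p : (ι → ℝ) × (ι → ℝ)) : fderiv ℝ a p (V p, K p) =
      ∑ α, V p α * fderiv ℝ a p (Pi.single α 1, 0) +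
        ∑ α, ∑ β, V p α * F p.1 α β * fderiv ℝ a p (0, Pi.single β 1) := by
    rw [Finset.sum_comm]
    simp_rw [← Finset.sum_mul]
    exact map_prodMk_eq_sum_smul_single (fderiv ℝ a p).toLinearMap (V p) (K p)
  simpa only [hexpand] using
    isWeakTransportSolution_monokineticMeasure volume hU hρ.continuous.measurable hρ_nonneg hJ
      hforce hdiv a ha hac

end Coordinates

/-- Proposition 7.1: a solution `(U, F, ρ)` of the relativistic Euler-Maxwell equations
gives, via the monokinetic measure `μ = ρ δ_{U=ξ} ⊗ Λ` (the pushforward of `ρ·Lebesgue`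
under `x ↦ (x, U(x))`), a weak solution of the relativistic massive Vlasov-Maxwell
equations: `μ` is supported on the mass shell and satisfies the weak transport
equation `∫ ξ^α ∂_{x^α}a + ξ^α F_{αβ} ∂_{ξ_β}a dμ = 0`. -/
theorem stmt13 (U : (Fin 4 → ℝ) → Fin 4 → ℝ) (hU : ContDiff ℝ 1 U)
    (ρ : (Fin 4 → ℝ) → ℝ) (hρ : ContDiff ℝ 1 ρ) (hρpos : ∀ x, 0 ≤ ρ x)
    (F : (Fin 4 → ℝ) → Fin 4 → Fin 4 → ℝ) (hFc : Continuous F)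
    (hanti : ∀ x (α β : Fin 4), F x α β = - F x β α)
    (hnorm : ∀ x, - (U x 0) ^ 2 + (U x 1) ^ 2 + (U x 2) ^ 2 + (U x 3) ^ 2 = -1)
    (hEuler : ∀ x (β : Fin 4), ∑ α : Fin 4, eta α * U x α * pdR (fun y => U y β) α x
        = ∑ α : Fin 4, eta α * U x α * F x α β)
    (hcont : ∀ x, ∑ α : Fin 4, pdR (fun y => eta α * U y α * ρ y) α x = 0)
    (μ : Measure ((Fin 4 → ℝ) × (Fin 4 → ℝ)))
    (hμ : μ = Measure.map (fun x => (x, U x))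
        (volume.withDensity (fun x => ENNReal.ofReal (ρ x)))) :
    (μ {p : (Fin 4 → ℝ) × (Fin 4 → ℝ) |
        - (p.2 0) ^ 2 + (p.2 1) ^ 2 + (p.2 2) ^ 2 + (p.2 3) ^ 2 ≠ -1} = 0) ∧
    (∀ a : ((Fin 4 → ℝ) × (Fin 4 → ℝ)) → ℝ, ContDiff ℝ (⊤ : ℕ∞) a → HasCompactSupport a →
      ∫ p, ((∑ α : Fin 4, eta α * p.2 α * fderiv ℝ a p (Pi.single α 1, 0))
        + ∑ α : Fin 4, ∑ β : Fin 4,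
            eta α * p.2 α * F p.1 α β * fderiv ℝ a p (0, Pi.single β 1)) ∂μ = 0) := by
  have hgen := stmt13_general eta hU hρ hρpos F
    (S := {ξ | -ξ 0 ^ 2 + ξ 1 ^ 2 + ξ 2 ^ 2 + ξ 3 ^ 2 = -1}) hnorm hEuler hcont
  exact hμ ▸ ⟨hgen.1, fun a ha hac => (hgen.2 a (ha.of_le (by simp)) hac).2⟩
end

section
/- Let Φ ∈ ℂ, d = (d₀, d₁, d₂, d₃) ∈ ℂ⁴, U = (U₀, U₁, U₂, U₃) ∈ ℝ⁴ with −U₀² + U₁² + U₂² + U₃² = −1, let F^ε and F be antisymmetric real 4×4 matrices, and let ρ ∈ ℝ. With η_α = −1 if α = 0 and η_α = 1 otherwise, η_{αβ} = diag(−1,1,1,1), define: J^ε_α = −Im(Φ·conj(d_α)); T^ε_{αβ} = Re(d_α conj(d_β)) − ½η_{αβ}(Σ_γ η_γ|d_γ|² + |Φ|²) + Σ_μ η_μ F^ε_{αμ}F^ε_{βμ} − ¼η_{αβ}Σ_{μ,ν}η_μη_ν(F^ε_{μν})²; T_{αβ} = ρU_αU_β + Σ_μ η_μ F_{αμ}F_{βμ}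 − ¼η_{αβ}Σ_{μ,ν}η_μη_ν(F_{μν})²; ξ_α = d_α − iU_αΦ; Ξ_{αβ} = F^ε_{αβ} − F_{αβ}; h_{αβ} = Re(ξ_α conj(ξ_β)) − ½η_{αβ}Σ_γ η_γ|ξ_γ|² + Σ_μ η_μ Ξ_{αμ}Ξ_{βμ} − ¼η_{αβ}Σ_{μ,ν}η_μη_ν(Ξ_{μν})²; I_{αβ} = −U_αU_β(ρ − |Φ|²) + U_α(J^ε_β − U_β|Φ|²) + U_β(J^ε_α − U_α|Φ|²) + Σ_μ η_μ [F_{αμ}Ξ_{βμ} + Ξ_{αμ}F_{βμ}] − η_{αβ}Σ_γ η_γ (J^ε_γ − U_γ|Φ|²)U_γ − ½η_{αβ}Σ_{μ,ν}η_μη_ν F_{μν}Ξ_{μν}. Then for all α, β ∈ {0,1,2,3}: T^ε_{αβ} − T_{αβ} = h_{αβ} + I_{αβ}. -/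
open ComplexConjugate

/-- The Minkowski metric `η_{αβ} = diag(−1,1,1,1)`. -/
noncomputable def etaM : Fin 4 → Fin 4 → ℝ := fun α β => if α = β then eta α else 0

/-!
Both stress-energy tensors are quadratic, so substituting `d = ξ + iUΦ` and `F^ε = F + Ξ` splits
each of them into a quadratic term in the differences, a linear cross term and a background term.
In the matter part the cross terms are read off from `Re ⟪ξ_α, iU_βΦ⟫ = U_β (J_α - U_α |Φ|²)`, and
the background term `U_α U_β |Φ|²` has trace `|Φ|² ∑ η_γ U_γ² = -|Φ|²`, which is exactly what the
mass term `|Φ|²` cancels. Subtracting the Euler–Maxwell tensor removes the background Maxwell tensor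
and turns `U_α U_β |Φ|²` into `-U_α U_β (ρ - |Φ|²)`.
-/

section StressEnergy

variable {ι E : Type*} [NormedAddCommGroup E] [InnerProductSpace ℂ E]

/-- The charge current `J_α = -Im ⟪d_α, Φ⟫` of a wave function `Φ` with covariant derivatives `d`.
As the inner product is conjugate-linear in its first argument, this is `-Im (Φ · conj d_α)` when
`E = ℂ`. -/
noncomputable def chargeCurrent (Φ : E) (d : ι → E) (α : ι) : ℝ :=
  -(inner ℂ (d α) Φ).im

/-- The modulated derivative `ξ_α = d_α - i U_α Φ`, which measures how far the covariant
derivatives `d` are from those of a wave oscillating with four-velocity `U`. -/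
noncomputable def modulatedDeriv (Φ : E) (d : ι → E) (U : ι → ℝ) (α : ι) : E :=
  d α - (Complex.I * (U α : ℂ)) • Φ

/-- The modulated current `J_α - U_α |Φ|²`: the charge current relative to that of a charge
density `|Φ|²` transported by the four-velocity `U`. -/
noncomputable def modulatedCurrent (Φ : E) (d : ι → E) (U : ι → ℝ) (α : ι) : ℝ :=
  chargeCurrent Φ d α - U α * ‖Φ‖ ^ 2

theorem re_inner_modulatedDeriv_smul (Φ : E) (d : ι → E) (U : ι → ℝ) (α β : ι) :
    (inner ℂ (modulatedDeriv Φ d U α) ((Complex.I * (U β : ℂ)) • Φ)).re =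
      U β * modulatedCurrent Φ d U α := by
  have h_inner : inner ℂ (modulatedDeriv Φ d U α) ((Complex.I * (U β : ℂ)) • Φ) =
      (U β : ℂ) * (inner ℂ (d α) Φ * Complex.I) - ((U α * U β * ‖Φ‖ ^ 2 : ℝ) : ℂ) := by
    simp only [modulatedDeriv, inner_smul_right, inner_sub_left, inner_smul_left,
      inner_self_eq_norm_sq_to_K, map_mul, Complex.conj_I, Complex.conj_ofReal,
      Complex.coe_algebraMap]
    push_cast
    linear_combination (U α * U β * ‖Φ‖ ^ 2 : ℂ) * Complex.I_sq
  rw [h_inner, Complex.sub_re, Complex.re_ofReal_mul, Complex.mul_I_re, Complex.ofReal_re,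
    modulatedCurrent, chargeCurrent]
  ring

theorem re_inner_eq_modulatedDeriv (Φ : E) (d : ι → E) (U : ι → ℝ) (α β : ι) :
    (inner ℂ (d β) (d α)).re =
      (inner ℂ (modulatedDeriv Φ d U β) (modulatedDeriv Φ d U α)).re + U α * U β * ‖Φ‖ ^ 2
        + U α * modulatedCurrent Φ d U β + U β * modulatedCurrent Φ d U α := by
  have h_split (γ : ι) : d γ = modulatedDeriv Φ d U γ + (Complex.I * (U γ : ℂ)) • Φ :=
    (sub_add_cancel _ _).symm
  have h_swap : (inner ℂ ((Complex.I * (U β : ℂ)) • Φ) (modulatedDeriv Φ d U α)).re =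
      U β * modulatedCurrent Φ d U α := by
    rw [← re_inner_modulatedDeriv_smul]
    exact inner_re_symm (𝕜 := ℂ) _ _
  have h_background : inner ℂ ((Complex.I * (U β : ℂ)) • Φ) ((Complex.I * (U α : ℂ)) • Φ) =
      ((U α * U β * ‖Φ‖ ^ 2 : ℝ) : ℂ) := by
    simp only [inner_smul_left, inner_smul_right, inner_self_eq_norm_sq_to_K, map_mul,
      Complex.conj_I, Complex.conj_ofReal, Complex.coe_algebraMap]
    push_cast
    linear_combination -(U α * U β * ‖Φ‖ ^ 2 : ℂ) * Complex.I_sq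
  conv_lhs => rw [h_split α, h_split β]
  rw [inner_add_left, inner_add_right, inner_add_right, Complex.add_re, Complex.add_re,
    Complex.add_re, h_swap, h_background, Complex.ofReal_re, re_inner_modulatedDeriv_smul]
  ring

theorem norm_sq_eq_modulatedDeriv (Φ : E) (d : ι → E) (U : ι → ℝ) (γ : ι) :
    ‖d γ‖ ^ 2 = ‖modulatedDeriv Φ d U γ‖ ^ 2 + U γ ^ 2 * ‖Φ‖ ^ 2
      + 2 * (modulatedCurrent Φ d U γ * U γ) := by
  have h_norm (v : E) : ‖v‖ ^ 2 = (inner ℂ v v).re := norm_sq_eq_re_inner (𝕜 := ℂ) v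
  rw [h_norm (d γ), h_norm (modulatedDeriv Φ d U γ), re_inner_eq_modulatedDeriv Φ d U]
  ring

variable [Fintype ι] (w : ι → ℝ) (g : ι → ι → ℝ)

/-- The stress-energy tensor of a massless scalar field with covariant derivatives `d`. Here and
below `g` is the metric and `w` is the diagonal of the inverse metric in an orthogonal frame, so
that `w γ` raises the index `γ`. -/
noncomputable def scalarStressEnergy (d : ι → E) (α β : ι) : ℝ :=
  (inner ℂ (d β) (d α)).re - (1 / 2) * g α β * ∑ γ, w γ * ‖d γ‖ ^ 2

/-- The Maxwell stress-energy tensor of a Faraday tensor `F`. -/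
noncomputable def maxwellStressEnergy (F : ι → ι → ℝ) (α β : ι) : ℝ :=
  (∑ m, w m * F α m * F β m) - (1 / 4) * g α β * ∑ m, ∑ n, w m * w n * F m n ^ 2

/-- The cross term of the Maxwell stress-energy tensor, that is, twice its polarization. -/
noncomputable def maxwellCrossTerm (F Ξ : ι → ι → ℝ) (α β : ι) : ℝ :=
  (∑ m, w m * (F α m * Ξ β m + Ξ α m * F β m))
    - (1 / 2) * g α β * ∑ m, ∑ n, w m * w n * F m n * Ξ m n

/-- The stress-energy tensor `T^ε` of the massive Klein–Gordon–Maxwell system. -/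
noncomputable def kleinGordonMaxwellStressEnergy (Φ : E) (d : ι → E) (F : ι → ι → ℝ)
    (α β : ι) : ℝ :=
  scalarStressEnergy w g d α β - (1 / 2) * g α β * ‖Φ‖ ^ 2 + maxwellStressEnergy w g F α β

/-- The stress-energy tensor `T` of the relativistic Euler–Maxwell system for a pressureless
charged fluid. -/
noncomputable def eulerMaxwellStressEnergy (ρ : ℝ) (U : ι → ℝ) (F : ι → ι → ℝ) (α β : ι) : ℝ :=
  ρ * U α * U β + maxwellStressEnergy w g F α β

/-- The modulated stress-energy tensor `h`, quadratic in the differences `ξ` and `Ξ`. -/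
noncomputable def modulatedStressEnergy (ξ : ι → E) (Ξ : ι → ι → ℝ) (α β : ι) : ℝ :=
  scalarStressEnergy w g ξ α β + maxwellStressEnergy w g Ξ α β

/-- The linear part `I` of the difference of the two stress-energy tensors, as a function of the
differences `δ` of the charge densities, `K` of the currents and `Ξ` of the Faraday tensors. -/
noncomputable def linearStressEnergy (U : ι → ℝ) (F : ι → ι → ℝ) (δ : ℝ) (K : ι → ℝ)
    (Ξ : ι → ι → ℝ) (α β : ι) : ℝ :=
  -U α * U β * δ + U α * K β + U β * K α - g α β * (∑ γ, w γ * K γ * U γ)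
    + maxwellCrossTerm w g F Ξ α β

theorem sum_norm_sq_eq_modulatedDeriv (Φ : E) (d : ι → E) (U : ι → ℝ) :
    ∑ γ, w γ * ‖d γ‖ ^ 2 =
      (∑ γ, w γ * ‖modulatedDeriv Φ d U γ‖ ^ 2) + (∑ γ, w γ * U γ ^ 2) * ‖Φ‖ ^ 2
        + 2 * ∑ γ, w γ * modulatedCurrent Φ d U γ * U γ := by
  simp only [Finset.sum_mul, Finset.mul_sum, ← Finset.sum_add_distrib]
  refine Finset.sum_congr rfl fun γ _ => ?_
  rw [norm_sq_eq_modulatedDeriv Φ d U γ]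
  ring

theorem scalarStressEnergy_eq_modulatedDeriv (Φ : E) (d : ι → E) (U : ι → ℝ) (α β : ι) :
    scalarStressEnergy w g d α β =
      scalarStressEnergy w g (modulatedDeriv Φ d U) α β
        + (U α * U β - (1 / 2) * g α β * ∑ γ, w γ * U γ ^ 2) * ‖Φ‖ ^ 2
        + (U α * modulatedCurrent Φ d U β + U β * modulatedCurrent Φ d U α
          - g α β * ∑ γ, w γ * modulatedCurrent Φ d U γ * U γ) := by
  rw [scalarStressEnergy, scalarStressEnergy, re_inner_eq_modulatedDeriv Φ d U,
    sum_norm_sq_eq_modulatedDeriv w Φ d U]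
  ring

theorem maxwellStressEnergy_add (F Ξ : ι → ι → ℝ) (α β : ι) :
    maxwellStressEnergy w g (F + Ξ) α β =
      maxwellStressEnergy w g F α β + maxwellStressEnergy w g Ξ α β
        + maxwellCrossTerm w g F Ξ α β := by
  have h_contraction : ∑ m, w m * (F + Ξ) α m * (F + Ξ) β m =
      (∑ m, w m * F α m * F β m) + (∑ m, w m * Ξ α m * Ξ β m)
        + ∑ m, w m * (F α m * Ξ β m + Ξ α m * F β m) := by
    simp only [Pi.add_apply, ← Finset.sum_add_distrib]
    exact Finset.sum_congr rfl fun m _ => by ring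
  have h_trace : ∑ m, ∑ n, w m * w n * (F + Ξ) m n ^ 2 =
      (∑ m, ∑ n, w m * w n * F m n ^ 2) + (∑ m, ∑ n, w m * w n * Ξ m n ^ 2)
        + 2 * ∑ m, ∑ n, w m * w n * F m n * Ξ m n := by
    simp only [Pi.add_apply, Finset.mul_sum, ← Finset.sum_add_distrib]
    exact Finset.sum_congr rfl fun m _ => Finset.sum_congr rfl fun n _ => by ring
  rw [maxwellStressEnergy, h_contraction, h_trace, maxwellStressEnergy, maxwellStressEnergy,
    maxwellCrossTerm]
  ring

theorem stmt16_general (Φ : E) (d : ι → E) (U : ι → ℝ) (hU : ∑ γ, w γ * U γ ^ 2 = -1)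
    (Fe F : ι → ι → ℝ) (ρ : ℝ) (α β : ι) :
    kleinGordonMaxwellStressEnergy w g Φ d Fe α β - eulerMaxwellStressEnergy w g ρ U F α β =
      modulatedStressEnergy w g (modulatedDeriv Φ d U) (Fe - F) α β
        + linearStressEnergy w g U F (ρ - ‖Φ‖ ^ 2) (modulatedCurrent Φ d U) (Fe - F) α β := by
  have h_maxwell := maxwellStressEnergy_add w g F (Fe - F) α β
  rw [add_sub_cancel] at h_maxwell
  rw [kleinGordonMaxwellStressEnergy, eulerMaxwellStressEnergy, modulatedStressEnergy,
    linearStressEnergy, scalarStressEnergy_eq_modulatedDeriv w g Φ d U, h_maxwell, hU]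
  ring

end StressEnergy

/-- Proposition 5.1: the pointwise algebraic decomposition
`T^ε_{mKGM} − T_{REM} = h + I` of the difference of the Klein-Gordon-Maxwell and
Euler-Maxwell stress-energy tensors into the modulated stress-energy tensor `h`
(quadratic in `ξ = d − iUΦ`, `Ξ = F^ε − F`) and the linear part `I`. -/
theorem stmt16 (Φ : ℂ) (d : Fin 4 → ℂ) (U : Fin 4 → ℝ)
    (hUnorm : - (U 0) ^ 2 + (U 1) ^ 2 + (U 2) ^ 2 + (U 3) ^ 2 = -1)
    (Fe F : Fin 4 → Fin 4 → ℝ)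
    (hFeanti : ∀ α β, Fe α β = - Fe β α) (hFanti : ∀ α β, F α β = - F β α)
    (ρ : ℝ)
    (J : Fin 4 → ℝ) (hJ : ∀ α, J α = - (Φ * conj (d α)).im)
    (Te : Fin 4 → Fin 4 → ℝ)
    (hTe : ∀ α β, Te α β = (d α * conj (d β)).re
      - (1/2) * etaM α β *
          ((∑ γ : Fin 4, eta γ * ‖d γ‖ ^ 2) + ‖Φ‖ ^ 2)
      + (∑ m : Fin 4, eta m * Fe α m * Fe β m)
      - (1/4) * etaM α β * ∑ m : Fin 4, ∑ n : Fin 4, eta m * eta n * (Fe m n) ^ 2)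
    (T : Fin 4 → Fin 4 → ℝ)
    (hT : ∀ α β, T α β = ρ * U α * U β
      + (∑ m : Fin 4, eta m * F α m * F β m)
      - (1/4) * etaM α β * ∑ m : Fin 4, ∑ n : Fin 4, eta m * eta n * (F m n) ^ 2)
    (ξ : Fin 4 → ℂ) (hξ : ∀ α, ξ α = d α - Complex.I * (U α : ℂ) * Φ)
    (Ξ : Fin 4 → Fin 4 → ℝ) (hΞ : ∀ α β, Ξ α β = Fe α β - F α β)
    (h : Fin 4 → Fin 4 → ℝ)
    (hh : ∀ α β, h α β = (ξ α * conj (ξ β)).re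
      - (1/2) * etaM α β * (∑ γ : Fin 4, eta γ * ‖ξ γ‖ ^ 2)
      + (∑ m : Fin 4, eta m * Ξ α m * Ξ β m)
      - (1/4) * etaM α β * ∑ m : Fin 4, ∑ n : Fin 4, eta m * eta n * (Ξ m n) ^ 2)
    (I : Fin 4 → Fin 4 → ℝ)
    (hI : ∀ α β, I α β = - U α * U β * (ρ - ‖Φ‖ ^ 2)
      + U α * (J β - U β * ‖Φ‖ ^ 2) + U β * (J α - U α * ‖Φ‖ ^ 2)
      + (∑ m : Fin 4, eta m * (F α m * Ξ β m + Ξ α m * F β m))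
      - etaM α β * (∑ γ : Fin 4, eta γ * (J γ - U γ * ‖Φ‖ ^ 2) * U γ)
      - (1/2) * etaM α β * ∑ m : Fin 4, ∑ n : Fin 4, eta m * eta n * F m n * Ξ m n) :
    ∀ α β : Fin 4, Te α β - T α β = h α β + I α β := by
  intro α β
  have h_general := stmt16_general eta etaM Φ d U
    (by simpa [Fin.sum_univ_four, eta] using hUnorm) Fe F ρ α β
  simp only [kleinGordonMaxwellStressEnergy, eulerMaxwellStressEnergy, modulatedStressEnergy,
    linearStressEnergy, scalarStressEnergy, maxwellStressEnergy, maxwellCrossTerm,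
    modulatedDeriv, modulatedCurrent, chargeCurrent, RCLike.inner_apply, smul_eq_mul,
    Pi.sub_apply] at h_general
  simp only [hTe, hT, hh, hI, hξ, hΞ, hJ]
  linear_combination h_general
end
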